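/- Consider a finite-horizon sequential decision making problem with observation space O, action space A, horizon H, and conditional probabilities P(o_{1:H} | a_{1:H}). For h ∈ {0,...,H−1}, let D_h be the system-dynamics matrix with rows indexed by futures ω_h ∈ (O×A)^{H−h} and columns indexed by histories τ_h ∈ (O×A)^h, with entry D_h[ω_h, τ_h] = P̄(τ_h, ω_h), the joint conditional probability of observing the full observation sequence given the full action sequence of (τ_h, ω_h). Suppose rank(D_h) = r_h for all h. Then there exist a scalar b₀ with |b₀| ≤ √(A^H), matrices B_h(o,a) ∈ ℝ^{r_h × r_{h−1}} with spectral norm ‖B_h(o,a)‖₂ ≤ 1, and vectors υ_h ∈ ℝ^{r_h} with ‖υ_h‖₂ ≤ √((O/A)^{H−h}), such that: (a) for all h, a: υ_hᵀ · Σ_o B_h(o,a) = υ_{h−1}ᵀ; and (b) for all histories τ_h = (o_{1:h}, a_{1:h}): P(o_{1:h} | a_{1:h}) = υ_hᵀ B_h(o_h,a_h) ⋯ B_1(o_1,a_1) b₀. -/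

import Mathlib

/-!
Let the columns of `U_h` be an orthonormal basis of the column space of the system-dynamics matrix
`D_h`. Prescribing the first future step `(o, a)` turns a column of `D_h` into a column of
`D_{h+1}`, so the column spaces are mapped into one another by these shifts, and in the
coordinates `U_hᵀ` the shifts become the operators `B_h(o, a)`. Composing them along a trajectory
therefore carries `U_0ᵀ D_0` to the coordinates `U_hᵀ D_h[·, τ_h]`, whose future mass is read off
by `1ᵀ U_h`. By causality that mass is a known multiple of `P(o_{1:h} | a_{1:h})`.

Futures are encoded here as full trajectories, so each row of `D_h` occurs `(OA)^h` times. Relative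
to the paper an orthonormal `U_h` is thus smaller by the factor `√(OA)^h`, which accounts for the
powers of `√(OA)` below.
-/

open Matrix

/-- Splice a history (coordinates `< h`) with a future (coordinates `≥ h`). -/
def splice {H : ℕ} {β : Type*} (h : ℕ) (hist fut : Fin H → β) : Fin H → β :=
  fun i => if (i : ℕ) < h then hist i else fut i

/-- The system-dynamics matrix `D_h` of a sequential decision making problem: rows are
indexed by futures, columns by histories (both encoded as full trajectories, of which
only the relevant coordinates matter), with entry `P̄(τ_h, ω_h)`. -/
noncomputable def sysDyn {O A H : ℕ}
    (p : (Fin H → Fin O) → (Fin H → Fin A) → ℝ) (h : ℕ) :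
    Matrix ((Fin H → Fin O) × (Fin H → Fin A)) ((Fin H → Fin O) × (Fin H → Fin A)) ℝ :=
  Matrix.of fun fut hist => p (splice h hist.1 fut.1) (splice h hist.2 fut.2)

/-- The marginal conditional probability `P(o_{1:h} | a_{1:h})`: sum of `p` over all
completions of the first `h` observations. -/
noncomputable def marg {O A H : ℕ}
    (p : (Fin H → Fin O) → (Fin H → Fin A) → ℝ) (h : ℕ)
    (o : ℕ → Fin O) (a : ℕ → Fin A) : ℝ :=
  ∑ o' : Fin H → Fin O,
    if (∀ i : Fin H, (i : ℕ) < h → o' i = o i) then p o' (fun i => a i) else 0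

/-- The operator chain `B_h(o_h,a_h) ⋯ B_1(o_1,a_1) b₀` applied along a trajectory. -/
noncomputable def chain {O A : ℕ} (r : ℕ → ℕ)
    (B : (h : ℕ) → Fin O → Fin A → Matrix (Fin (r (h + 1))) (Fin (r h)) ℝ)
    (b₀ : ℝ) (o : ℕ → Fin O) (a : ℕ → Fin A) : (h : ℕ) → Fin (r h) → ℝ
  | 0 => fun _ => b₀
  | h + 1 => (B h (o h) (a h)).mulVec (chain r B b₀ o a h)

section Trajectories

section Piecewise

variable {ι : Type*} [Fintype ι] [DecidableEq ι]

theorem card_filter_piecewise_eq {β : ι → Type*} [∀ i, Fintype (β i)] [∀ i, DecidableEq (β i)]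
    (s : Finset ι) {f g : ∀ i, β i} (h : ∀ i ∈ s, g i = f i) :
    Finset.card {t | s.piecewise f t = g} = ∏ i ∈ s, Fintype.card (β i) := by
  have fibre : ({t | s.piecewise f t = g} : Finset (∀ i, β i)) =
      Fintype.piFinset fun i => if i ∈ s then Finset.univ else {g i} := by
    ext t
    simp only [Finset.mem_filter_univ, Fintype.mem_piFinset, funext_iff]
    refine forall_congr' fun i => ?_
    by_cases hi : i ∈ s <;> simp [hi, h]
  simp [fibre, apply_ite Finset.card]

theorem sum_comp_piecewise {β : ι → Type*} [∀ i, Fintype (β i)] [∀ i, DecidableEq (β i)]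
    {M : Type*} [AddCommMonoid M] (s : Finset ι) (f : ∀ i, β i) (F : (∀ i, β i) → M) :
    ∑ t, F (s.piecewise f t) =
      (∏ i ∈ s, Fintype.card (β i)) • ∑ t with ∀ i ∈ s, t i = f i, F t := by
  calc ∑ t, F (s.piecewise f t)
      = ∑ g with ∀ i ∈ s, g i = f i, ∑ t with s.piecewise f t = g, F (s.piecewise f t) :=
        (Finset.sum_fiberwise_of_maps_to (fun t _ => by simp +contextual) _).symm
    _ = ∑ g with ∀ i ∈ s, g i = f i, (∏ i ∈ s, Fintype.card (β i)) • F g := by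
        refine Finset.sum_congr rfl fun g hg => ?_
        rw [Finset.sum_congr rfl fun t ht => congrArg F (Finset.mem_filter.mp ht).2,
          Finset.sum_const, card_filter_piecewise_eq s (Finset.mem_filter.mp hg).2]
    _ = _ := Finset.smul_sum.symm

theorem sum_comp_update_le {β M : Type*} [Fintype β] [AddCommMonoid M] [PartialOrder M]
    [IsOrderedAddMonoid M] (i : ι) (b : β) {F : (ι → β) → M} (hF : ∀ t, 0 ≤ F t) :
    ∑ t, F (Function.update t i b) ≤ Fintype.card β • ∑ t, F t := by
  classical
  have := sum_comp_piecewise {i} (fun _ => b) F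
  simp only [Finset.piecewise_singleton, Finset.prod_singleton] at this
  rw [this]
  exact nsmul_le_nsmul_right (Finset.sum_le_univ_sum_of_nonneg hF) _

end Piecewise

variable {H : ℕ} {β : Type*}

theorem splice_zero (f g : Fin H → β) : splice 0 f g = g := by
  ext i
  simp [splice]

theorem splice_eq_piecewise (h : ℕ) (f g : Fin H → β) :
    splice h f g = Finset.piecewise {i : Fin H | (i : ℕ) < h} f g := by
  ext i
  simp [splice, Finset.piecewise]

theorem sum_comp_splice [Fintype β] [DecidableEq β] {M : Type*} [AddCommMonoid M] {h : ℕ}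
    (hh : h ≤ H) (f : Fin H → β) (F : (Fin H → β) → M) :
    ∑ t, F (splice h f t) =
      Fintype.card β ^ h • ∑ t with ∀ i : Fin H, (i : ℕ) < h → t i = f i, F t := by
  simp [splice_eq_piecewise, sum_comp_piecewise, Fin.card_filter_val_lt, hh]

/-- The trajectory `t` with its step `h` (counted from `0`) replaced by `b`. Indexing by `ℕ` rather
than by `Fin H` allows operators at time `h` to be defined without a proof of `h < H`. -/
def setAt (h : ℕ) (b : β) (t : Fin H → β) : Fin H → β :=
  fun i => if (i : ℕ) = h then b else t i

theorem setAt_val (i : Fin H) (b : β) (t : Fin H → β) :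
    setAt (i : ℕ) b t = Function.update t i b := by
  ext j
  simp [setAt, Function.update_apply, Fin.ext_iff]

theorem setAt_comp_val (h : ℕ) (b : β) (f : ℕ → β) :
    setAt h b (fun i : Fin H => f i) = fun i : Fin H => Function.update f h b i := by
  ext i
  simp [setAt, Function.update_apply]

theorem splice_setAt (h : ℕ) (b : β) (f g : Fin H → β) :
    splice h f (setAt h b g) = splice (h + 1) (setAt h b f) g := by
  ext i
  simp only [splice, setAt]
  grind

/-- A full trajectory: `H` observations and `H` actions. Both the histories and the futures indexing
`sysDyn` are encoded by this type. -/
abbrev Trajectory (O A H : ℕ) : Type := (Fin H → Fin O) × (Fin H → Fin A)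

variable {O A : ℕ}

/-- Replacement of step `h` of a trajectory by the observation `o` and the action `a`. On futures it
prescribes the first step, on histories it appends a step. -/
def setStep (h : ℕ) (o : Fin O) (a : Fin A) (t : Trajectory O A H) : Trajectory O A H :=
  (setAt h o t.1, setAt h a t.2)

/-- The first `H` steps of infinite observation and action sequences. -/
def truncate (H : ℕ) (o : ℕ → Fin O) (a : ℕ → Fin A) : Trajectory O A H :=
  (fun i => o i, fun i => a i)

theorem setStep_truncate (h : ℕ) (o₀ : Fin O) (a₀ : Fin A) (o : ℕ → Fin O) (a : ℕ → Fin A) :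
    setStep h o₀ a₀ (truncate H o a) =
      truncate H (Function.update o h o₀) (Function.update a h a₀) := by
  simp only [setStep, truncate, setAt_comp_val]

theorem exists_truncate_eq (hO : 0 < O) (hA : 0 < A) (τ : Trajectory O A H) :
    ∃ o a, truncate H o a = τ := by
  have := Fin.pos_iff_nonempty.mp hO
  have := Fin.pos_iff_nonempty.mp hA
  obtain ⟨o, ho⟩ := Fin.val_injective.surjective_comp_right τ.1
  obtain ⟨a, ha⟩ := Fin.val_injective.surjective_comp_right τ.2
  exact ⟨o, a, Prod.ext ho ha⟩

theorem sum_comp_setStep_le {M : Type*} [AddCommMonoid M] [PartialOrder M] [IsOrderedAddMonoid M]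
    {h : ℕ} (hh : h < H) (o : Fin O) (a : Fin A) {F : Trajectory O A H → M} (hF : ∀ t, 0 ≤ F t) :
    ∑ t, F (setStep h o a t) ≤ (O * A) • ∑ t, F t := by
  lift h to Fin H using hh
  simp only [setStep, setAt_val, Fintype.sum_prod_type]
  calc ∑ x, ∑ y, F (Function.update x h o, Function.update y h a)
      ≤ O • ∑ x, ∑ y, F (x, Function.update y h a) := by
        simpa using sum_comp_update_le h o (F := fun x => ∑ y, F (x, Function.update y h a))
          fun x => Finset.sum_nonneg fun y _ => hF _
    _ ≤ O • ∑ x, A • ∑ y, F (x, y) := by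
        refine nsmul_le_nsmul_right (Finset.sum_le_sum fun x _ => ?_) O
        simpa using sum_comp_update_le h a (F := fun y => F (x, y)) fun y => hF _
    _ = (O * A) • ∑ x, ∑ y, F (x, y) := by rw [← Finset.smul_sum, mul_smul]

end Trajectories

section OrthonormalColumns

variable {R m n k : Type*} [Fintype m]

theorem sum_sq_eq_dotProduct [Fintype k] [CommSemiring R] (v : k → R) : ∑ i, v i ^ 2 = v ⬝ᵥ v := by
  simp only [dotProduct, sq]

theorem sum_sq_mulVec_of_transpose_mul_self [Fintype k] [DecidableEq k] [CommSemiring R]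
    {U : Matrix m k R} (hU : Uᵀ * U = 1) (x : k → R) : ∑ t, (U *ᵥ x) t ^ 2 = ∑ i, x i ^ 2 := by
  rw [sum_sq_eq_dotProduct, sum_sq_eq_dotProduct, dotProduct_mulVec, ← mulVec_transpose,
    mulVec_mulVec, hU, one_mulVec]

theorem sum_sq_vecMul_le_of_transpose_mul_self [Fintype k] [DecidableEq k] [CommRing R]
    [LinearOrder R] [IsStrictOrderedRing R] {U : Matrix m k R} (hU : Uᵀ * U = 1) (v : m → R) :
    ∑ i, (v ᵥ* U) i ^ 2 ≤ ∑ t, v t ^ 2 := by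
  have norm_proj := sum_sq_mulVec_of_transpose_mul_self hU (v ᵥ* U)
  have residual : 0 ≤ ∑ t, (v - U *ᵥ (v ᵥ* U)) t ^ 2 := Finset.sum_nonneg fun t _ => sq_nonneg _
  simp only [sum_sq_eq_dotProduct] at norm_proj residual ⊢
  rw [sub_dotProduct, dotProduct_sub, dotProduct_sub, norm_proj,
    dotProduct_comm (U *ᵥ _) v, dotProduct_mulVec v U] at residual
  linarith

/-- The columns of `U` form an orthonormal basis of the column space of `D`. This is the property of
the left singular vectors `U_h` of the system-dynamics matrix that the construction relies on. -/
structure IsOrthonormalColBasis [CommSemiring R] [Fintype n] [Fintype k] [DecidableEq k]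
    (U : Matrix m k R) (D : Matrix m n R) : Prop where
  transpose_mul_self : Uᵀ * U = 1
  mul_transpose_mul : U * Uᵀ * D = D
  exists_eq_mul : ∃ C : Matrix n k R, U = D * C

theorem mul_transpose_self_of_orthonormal [DecidableEq k] {v : k → EuclideanSpace ℝ m}
    (hv : Orthonormal ℝ v) :
    (Matrix.of fun i => (v i).ofLp) * (Matrix.of fun i => (v i).ofLp)ᵀ = 1 := by
  ext i j
  have := orthonormal_iff_ite.mp hv i j
  rw [EuclideanSpace.inner_eq_star_dotProduct, star_trivial, dotProduct_comm] at this
  exact this.trans one_apply.symm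

theorem transpose_mulVec_mulVec_of_orthonormalBasis [Fintype k]
    {W : Submodule ℝ (EuclideanSpace ℝ m)} (b : OrthonormalBasis k ℝ W) (w : W) :
    (Matrix.of fun i => (b i).1.ofLp)ᵀ *ᵥ (Matrix.of fun i => (b i).1.ofLp) *ᵥ w.1.ofLp =
      w.1.ofLp := by
  have coords : (Matrix.of fun i => (b i).1.ofLp) *ᵥ w.1.ofLp = b.repr w := by
    ext i
    rw [b.repr_apply_apply, Submodule.coe_inner, EuclideanSpace.inner_eq_star_dotProduct,
      star_trivial, dotProduct_comm]
    rfl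
  have expansion : w.1.ofLp = ∑ i, b.repr w i • (b i).1.ofLp := by
    simpa using congrArg (fun z : W => z.1.ofLp) (b.sum_repr w).symm
  rw [coords, mulVec_transpose, vecMul_eq_sum, expansion]
  rfl

theorem exists_isOrthonormalColBasis [Fintype n] (D : Matrix m n ℝ) {r : ℕ} (hr : D.rank = r) :
    ∃ U : Matrix m (Fin r) ℝ, IsOrthonormalColBasis U D := by
  classical
  let L := (WithLp.linearEquiv 2 ℝ (m → ℝ)).symm
  let W : Submodule ℝ (EuclideanSpace ℝ m) := (LinearMap.range D.mulVecLin).map L.toLinearMap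
  have finrank_W : Module.finrank ℝ W = r := by
    rw [← hr, Matrix.rank]
    exact LinearEquiv.finrank_map_eq L _
  let b := (stdOrthonormalBasis ℝ W).reindex (finCongr finrank_W)
  refine ⟨(Matrix.of fun i => (b i).1.ofLp)ᵀ, ?_, ?_, ?_⟩
  · exact mul_transpose_self_of_orthonormal (b.orthonormal.comp_linearIsometry W.subtypeₗᵢ)
  · rw [Matrix.mul_assoc]
    ext t j
    let w : W := ⟨L (D.col j), _, ⟨Pi.single j 1, mulVec_single_one D j⟩, rfl⟩
    exact congrFun (transpose_mulVec_mulVec_of_orthonormalBasis b w) t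
  · have mem_range (i) : ∃ y, D *ᵥ y = (b i).1.ofLp := by
      obtain ⟨_, ⟨y, rfl⟩, hy⟩ := (b i).2
      exact ⟨y, congrArg WithLp.ofLp hy⟩
    choose y hy using mem_range
    exact ⟨(Matrix.of y)ᵀ, by ext t i; exact (congrFun (hy i) t).symm⟩

theorem IsOrthonormalColBasis.mulVec_transpose_mulVec_col [CommSemiring R] [Fintype n]
    [Fintype k] [DecidableEq k] {U : Matrix m k R} {D : Matrix m n R}
    (hU : IsOrthonormalColBasis U D) (j : n) :
    U *ᵥ Uᵀ *ᵥ D.col j = D.col j := by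
  rw [mulVec_mulVec]
  exact congrArg (fun M => M.col j) hU.mul_transpose_mul

end OrthonormalColumns

section SystemDynamics

variable {O A H : ℕ} {p : (Fin H → Fin O) → (Fin H → Fin A) → ℝ}

/-- Causality of a sequential decision making problem: the law of the first `h` observations depends
on the first `h` actions only. -/
def IsCausal (p : (Fin H → Fin O) → (Fin H → Fin A) → ℝ) : Prop :=
  ∀ h ≤ H, ∀ (o : ℕ → Fin O) (a a' : ℕ → Fin A),
    (∀ i, i < h → a i = a' i) → marg p h o a = marg p h o a'

theorem sum_marg_succ {h : ℕ} (hh : h < H) (o : ℕ → Fin O) (a : ℕ → Fin A) :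
    ∑ b, marg p (h + 1) (Function.update o h b) a = marg p h o a := by
  have agrees_iff (b : Fin O) (t : Fin H → Fin O) :
      (∀ i : Fin H, (i : ℕ) < h + 1 → t i = Function.update o h b i) ↔
        t ⟨h, hh⟩ = b ∧ ∀ i : Fin H, (i : ℕ) < h → t i = o i := by
    simp only [Function.update_apply]
    refine ⟨fun agrees => ⟨by simpa using agrees ⟨h, hh⟩,
      fun i hi => by simpa [hi.ne] using agrees i (by lia)⟩, ?_⟩
    rintro ⟨rfl, agrees⟩ i hi
    split_ifs with hih
    · exact congrArg t (Fin.ext hih)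
    · exact agrees i (by lia)
  unfold marg
  rw [Finset.sum_comm]
  simp only [agrees_iff, ite_and]
  simp

theorem col_sysDyn_zero (τ : Trajectory O A H) : (sysDyn p 0).col τ = fun t => p t.1 t.2 := by
  ext t
  simp [sysDyn, splice_zero]

theorem sysDyn_submatrix_setStep (h : ℕ) (o : Fin O) (a : Fin A) :
    (sysDyn p h).submatrix (setStep h o a) id =
      (sysDyn p (h + 1)).submatrix id (setStep h o a) := by
  ext t τ
  simp [sysDyn, setStep, splice_setAt]

theorem one_vecMul_sysDyn_truncate (hp : IsCausal p) {h : ℕ} (hh : h ≤ H) (o : ℕ → Fin O)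
    (a : ℕ → Fin A) :
    (1 ᵥ* sysDyn p h) (truncate H o a) = (A : ℝ) ^ H * (O : ℝ) ^ h * marg p h o a := by
  have sum_obs (y : Fin H → Fin A) :
      ∑ x, sysDyn p h (x, y) (truncate H o a) = (O : ℝ) ^ h * marg p h o a := by
    have : Nonempty (Fin A) := ⟨a 0⟩
    obtain ⟨y, rfl⟩ := Fin.val_injective.surjective_comp_right y
    calc ∑ x, sysDyn p h (x, y ∘ Fin.val) (truncate H o a)
        = Fintype.card (Fin O) ^ h • ∑ x with ∀ i : Fin H, (i : ℕ) < h → x i = o i,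
            p x (splice h (fun i => a i) (y ∘ Fin.val)) :=
          sum_comp_splice hh _ fun x => p x (splice h (fun i => a i) (y ∘ Fin.val))
      _ = (O : ℝ) ^ h * marg p h o fun i => if i < h then a i else y i := by
          rw [Fintype.card_fin, nsmul_eq_mul, Nat.cast_pow, Finset.sum_filter]
          rfl
      _ = (O : ℝ) ^ h * marg p h o a := by rw [hp h hh o _ a fun i hi => if_pos hi]
  simp [vecMul, dotProduct, Fintype.sum_prod_type_right, sum_obs, mul_assoc]

theorem sum_one_vecMul_sysDyn_submatrix (hp : IsCausal p) (hO : 0 < O) {h : ℕ} (hh : h < H)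
    (a : Fin A) :
    ∑ o, 1 ᵥ* (sysDyn p h).submatrix (setStep h o a) id = (O : ℝ) • 1 ᵥ* sysDyn p h := by
  ext τ
  obtain ⟨o', a', rfl⟩ := exists_truncate_eq hO (Fin.pos a) τ
  have append (o : Fin O) :
      (1 ᵥ* (sysDyn p h).submatrix (setStep h o a) id) (truncate H o' a') =
        A ^ H * O ^ (h + 1) *
          marg p (h + 1) (Function.update o' h o) (Function.update a' h a) := by
    rw [sysDyn_submatrix_setStep, ← one_vecMul_sysDyn_truncate hp hh, ← setStep_truncate]
    rfl
  rw [Finset.sum_apply, Finset.sum_congr rfl fun o _ => append o, ← Finset.mul_sum,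
    sum_marg_succ hh, hp h hh.le o' _ a' fun i hi => Function.update_of_ne hi.ne a a',
    Pi.smul_apply, one_vecMul_sysDyn_truncate hp hh.le, smul_eq_mul]
  ring

theorem rank_sysDyn_zero_le_one : (sysDyn p 0).rank ≤ 1 := by
  have : sysDyn p 0 = vecMulVec (fun t => p t.1 t.2) 1 := by
    ext t τ
    exact (congrFun (col_sysDyn_zero τ) t).trans (mul_one _).symm
  exact this ▸ rank_vecMulVec_le _ _

theorem sum_sq_le_of_conditional (hpos : ∀ o a, 0 ≤ p o a) (hnorm : ∀ a, ∑ o, p o a = 1) :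
    ∑ t : Trajectory O A H, p t.1 t.2 ^ 2 ≤ (A : ℝ) ^ H := by
  calc ∑ t : Trajectory O A H, p t.1 t.2 ^ 2
      = ∑ a, ∑ o, p o a ^ 2 := Fintype.sum_prod_type_right _
    _ ≤ ∑ a, (∑ o, p o a) ^ 2 :=
        Finset.sum_le_sum fun a _ => Finset.sum_sq_le_sq_sum_of_nonneg fun o _ => hpos o a
    _ = (A : ℝ) ^ H := by simp [hnorm]

end SystemDynamics

section ObservableOperators

variable {O A H : ℕ} {p : (Fin H → Fin O) → (Fin H → Fin A) → ℝ} {h : ℕ}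
  {k k' : Type*}

/-- The observable operator at time `h`: the shift of futures by `(o, a)`, expressed in the bases
formed by the columns of `U` (at time `h`) and of `U'` (at time `h + 1`). In the paper's indexing it
is `B_{h+1}(o, a)`. -/
noncomputable def obsOp (h : ℕ) (U' : Matrix (Trajectory O A H) k' ℝ)
    (U : Matrix (Trajectory O A H) k ℝ) (o : Fin O) (a : Fin A) : Matrix k' k ℝ :=
  (√(O * A))⁻¹ • (U'ᵀ * U.submatrix (setStep h o a) id)

/-- The evaluation vector `υ_h`. Paired with coordinates in the basis `U`, it sums a vector over all
futures and normalizes the result. -/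
noncomputable def evalVec (h : ℕ) (U : Matrix (Trajectory O A H) k ℝ) : k → ℝ :=
  ((A : ℝ) ^ (H - h) * √(O * A) ^ h)⁻¹ • 1 ᵥ* U

/-- The scalar `b₀`: the single coordinate, with respect to the column of `U`, of the columns of
`sysDyn p 0`, which are all equal. The sum makes sense for any number of columns of `U`. -/
noncomputable def initVal [Fintype k] (U : Matrix (Trajectory O A H) k ℝ)
    (p : (Fin H → Fin O) → (Fin H → Fin A) → ℝ) : ℝ :=
  ∑ i, (Uᵀ *ᵥ fun t => p t.1 t.2) i

theorem obsOp_mulVec [Fintype k] (U' : Matrix (Trajectory O A H) k' ℝ)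
    (U : Matrix (Trajectory O A H) k ℝ) (o : Fin O) (a : Fin A) (x : k → ℝ) :
    obsOp h U' U o a *ᵥ x = (√(O * A))⁻¹ • U'ᵀ *ᵥ fun t => (U *ᵥ x) (setStep h o a t) := by
  rw [obsOp, smul_mulVec, ← mulVec_mulVec]
  rfl

theorem sum_sq_obsOp_mulVec_le [Fintype k] [DecidableEq k] [Fintype k'] [DecidableEq k']
    (hh : h < H) {U' : Matrix (Trajectory O A H) k' ℝ} (hU' : U'ᵀ * U' = 1)
    {U : Matrix (Trajectory O A H) k ℝ} (hU : Uᵀ * U = 1) (o : Fin O) (a : Fin A) (x : k → ℝ) :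
    ∑ i, (obsOp h U' U o a *ᵥ x) i ^ 2 ≤ ∑ j, x j ^ 2 := by
  have hO : (0 : ℝ) < O := mod_cast Fin.pos o
  have hA : (0 : ℝ) < A := mod_cast Fin.pos a
  simp only [obsOp_mulVec, Pi.smul_apply, smul_eq_mul, mul_pow, ← Finset.mul_sum, inv_pow,
    mulVec_transpose, Real.sq_sqrt (mul_pos hO hA).le]
  rw [inv_mul_le_iff₀ (mul_pos hO hA)]
  calc ∑ i, ((fun t => (U *ᵥ x) (setStep h o a t)) ᵥ* U') i ^ 2
      ≤ ∑ t, (U *ᵥ x) (setStep h o a t) ^ 2 := sum_sq_vecMul_le_of_transpose_mul_self hU' _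
    _ ≤ O * A * ∑ t, (U *ᵥ x) t ^ 2 := by
        simpa using sum_comp_setStep_le hh o a (F := fun t => (U *ᵥ x) t ^ 2) fun _ => sq_nonneg _
    _ = O * A * ∑ j, x j ^ 2 := by rw [sum_sq_mulVec_of_transpose_mul_self hU]

theorem sum_sq_evalVec_le [Fintype k] [DecidableEq k] (hh : h ≤ H) (hO : 0 < O) (hA : 0 < A)
    {U : Matrix (Trajectory O A H) k ℝ} (hU : Uᵀ * U = 1) :
    ∑ i, evalVec h U i ^ 2 ≤ ((O : ℝ) / A) ^ (H - h) := by
  obtain ⟨d, rfl⟩ := Nat.exists_eq_add_of_le hh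
  have num_traj : ∑ i, (1 ᵥ* U) i ^ 2 ≤ (O : ℝ) ^ (h + d) * A ^ (h + d) := by
    simpa using sum_sq_vecMul_le_of_transpose_mul_self hU 1
  simp only [evalVec, Pi.smul_apply, smul_eq_mul, mul_pow, ← Finset.mul_sum]
  calc (((A : ℝ) ^ (h + d - h) * √(O * A) ^ h)⁻¹) ^ 2 * ∑ i, (1 ᵥ* U) i ^ 2
      ≤ (((A : ℝ) ^ (h + d - h) * √(O * A) ^ h)⁻¹) ^ 2 * (O ^ (h + d) * A ^ (h + d)) := by gcongr
    _ = ((O : ℝ) / A) ^ (h + d - h) := by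
        rw [inv_pow, mul_pow, pow_right_comm √_, Real.sq_sqrt (by positivity),
          Nat.add_sub_cancel_left, div_pow]
        field_simp
        ring

theorem sq_initVal_le [Fintype k] [DecidableEq k] [Subsingleton k]
    {U : Matrix (Trajectory O A H) k ℝ} (hU : Uᵀ * U = 1) (hpos : ∀ o a, 0 ≤ p o a)
    (hnorm : ∀ a, ∑ o, p o a = 1) : initVal U p ^ 2 ≤ (A : ℝ) ^ H := by
  calc initVal U p ^ 2 = ∑ i, ((fun t => p t.1 t.2) ᵥ* U) i ^ 2 := by
        rw [initVal, mulVec_transpose]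
        cases isEmpty_or_nonempty k
        · simp
        · have := uniqueOfSubsingleton (Classical.arbitrary k)
          simp
    _ ≤ ∑ t : Trajectory O A H, p t.1 t.2 ^ 2 := sum_sq_vecMul_le_of_transpose_mul_self hU _
    _ ≤ (A : ℝ) ^ H := sum_sq_le_of_conditional hpos hnorm

theorem mul_transpose_mul_submatrix_setStep [Fintype k] [DecidableEq k] [Fintype k']
    [DecidableEq k'] {U' : Matrix (Trajectory O A H) k' ℝ}
    (hU' : IsOrthonormalColBasis U' (sysDyn p (h + 1))) {U : Matrix (Trajectory O A H) k ℝ}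
    (hU : IsOrthonormalColBasis U (sysDyn p h)) (o : Fin O) (a : Fin A) :
    U' * (U'ᵀ * U.submatrix (setStep h o a) id) = U.submatrix (setStep h o a) id := by
  obtain ⟨C, hC⟩ := hU.exists_eq_mul
  have factor : U.submatrix (setStep h o a) id =
      (sysDyn p (h + 1)).submatrix id (setStep h o a) * C := by
    rw [hC, ← sysDyn_submatrix_setStep]
    rfl
  rw [factor, ← Matrix.mul_assoc, ← Matrix.mul_assoc]
  exact congrArg (fun M => M.submatrix id (setStep h o a) * C) hU'.mul_transpose_mul

theorem sum_one_vecMul_submatrix_setStep [Fintype k] [DecidableEq k] (hp : IsCausal p) (hO : 0 < O)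
    (hh : h < H) {U : Matrix (Trajectory O A H) k ℝ} (hU : IsOrthonormalColBasis U (sysDyn p h))
    (a : Fin A) :
    ∑ o, 1 ᵥ* U.submatrix (setStep h o a) id = (O : ℝ) • 1 ᵥ* U := by
  obtain ⟨C, rfl⟩ := hU.exists_eq_mul
  calc ∑ o, 1 ᵥ* (sysDyn p h * C).submatrix (setStep h o a) id
      = ∑ o, (1 ᵥ* (sysDyn p h).submatrix (setStep h o a) id) ᵥ* C := by
        simp only [vecMul_vecMul]
        rfl
    _ = (O : ℝ) • 1 ᵥ* (sysDyn p h * C) := by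
        rw [← sum_vecMul, sum_one_vecMul_sysDyn_submatrix hp hO hh, smul_vecMul, vecMul_vecMul]

theorem vecMul_sum_obsOp_evalVec [Fintype k] [DecidableEq k] [Fintype k'] [DecidableEq k']
    (hp : IsCausal p) (hO : 0 < O) (hh : h < H)
    {U' : Matrix (Trajectory O A H) k' ℝ} (hU' : IsOrthonormalColBasis U' (sysDyn p (h + 1)))
    {U : Matrix (Trajectory O A H) k ℝ} (hU : IsOrthonormalColBasis U (sysDyn p h)) (a : Fin A) :
    evalVec (h + 1) U' ᵥ* ∑ o, obsOp h U' U o a = evalVec h U := by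
  have one_vecMul_obsOp (o : Fin O) : (1 ᵥ* U') ᵥ* obsOp h U' U o a =
      (√(O * A))⁻¹ • 1 ᵥ* U.submatrix (setStep h o a) id := by
    rw [obsOp, vecMul_smul, vecMul_vecMul, mul_transpose_mul_submatrix_setStep hU' hU]
  have scaling : ((A : ℝ) ^ (H - (h + 1)) * √(O * A) ^ (h + 1))⁻¹ * (√(O * A))⁻¹ * O =
      ((A : ℝ) ^ (H - h) * √(O * A) ^ h)⁻¹ := by
    have hO' : (0 : ℝ) < O := mod_cast hO
    have hA' : (0 : ℝ) < A := mod_cast Fin.pos a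
    have hc := Real.sq_sqrt (mul_pos hO' hA').le
    obtain ⟨d, rfl⟩ := Nat.exists_eq_add_of_lt hh
    rw [show h + d + 1 - (h + 1) = d by lia, show h + d + 1 - h = d + 1 by lia]
    field_simp
    linear_combination -(A : ℝ) ^ d * √(O * A) ^ h * hc
  simp only [evalVec, vecMul_sum, smul_vecMul, one_vecMul_obsOp, ← Finset.smul_sum,
    sum_one_vecMul_submatrix_setStep hp hO hh hU, smul_smul, scaling]

section Chain

variable {r : ℕ → ℕ} {U : (h : ℕ) → Matrix (Trajectory O A H) (Fin (r h)) ℝ}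

theorem chain_obsOp_eq [Subsingleton (Fin (r 0))]
    (hU : ∀ h ≤ H, IsOrthonormalColBasis (U h) (sysDyn p h)) (o : ℕ → Fin O) (a : ℕ → Fin A)
    (hh : h ≤ H) :
    chain r (fun h => obsOp h (U (h + 1)) (U h)) (initVal (U 0) p) o a h =
      (√(O * A) ^ h)⁻¹ • (U h)ᵀ *ᵥ (sysDyn p h).col (truncate H o a) := by
  induction h with
  | zero =>
    ext i
    rw [chain, initVal, Fintype.sum_subsingleton _ i, col_sysDyn_zero, pow_zero, inv_one, one_smul]
  | succ h ih =>
    have shift_col (t) : (sysDyn p h).col (truncate H o a) (setStep h (o h) (a h) t) =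
        (sysDyn p (h + 1)).col (truncate H o a) t := by
      have := congrFun₂ (sysDyn_submatrix_setStep (p := p) h (o h) (a h)) t (truncate H o a)
      simpa [setStep_truncate] using this
    rw [chain, ih (by lia), mulVec_smul, obsOp_mulVec,
      (hU h (by lia)).mulVec_transpose_mulVec_col, smul_smul, pow_succ, mul_inv]
    exact congrArg _ (congrArg _ (funext shift_col))

theorem marg_eq_sum_evalVec_mul_chain [Subsingleton (Fin (r 0))] (hp : IsCausal p)
    (hU : ∀ h ≤ H, IsOrthonormalColBasis (U h) (sysDyn p h)) (hh : h ≤ H) (o : ℕ → Fin O)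
    (a : ℕ → Fin A) :
    marg p h o a = ∑ i, evalVec h (U h) i *
      chain r (fun h => obsOp h (U (h + 1)) (U h)) (initVal (U 0) p) o a h i := by
  have hO : (0 : ℝ) < O := mod_cast Fin.pos (o 0)
  have hA : (0 : ℝ) < A := mod_cast Fin.pos (a 0)
  have mass : 1 ᵥ* U h ⬝ᵥ (U h)ᵀ *ᵥ (sysDyn p h).col (truncate H o a) =
      (A : ℝ) ^ H * (O : ℝ) ^ h * marg p h o a := by
    rw [← one_vecMul_sysDyn_truncate hp hh, ← dotProduct_mulVec,
      (hU h hh).mulVec_transpose_mulVec_col]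
    rfl
  change _ = evalVec h (U h) ⬝ᵥ _
  rw [chain_obsOp_eq hU o a hh, evalVec, smul_dotProduct, dotProduct_smul, mass]
  obtain ⟨d, rfl⟩ := Nat.exists_eq_add_of_le hh
  have hc : (√(O * A : ℝ) ^ h) ^ 2 = (O : ℝ) ^ h * A ^ h := by
    rw [pow_right_comm, Real.sq_sqrt (mul_pos hO hA).le, mul_pow]
  rw [Nat.add_sub_cancel_left, smul_eq_mul, smul_eq_mul]
  field_simp
  rw [hc]
  ring

end Chain

end ObservableOperators

/-- Self-consistent OOM representation: every sequential decision making problem with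
`rank(D_h) = r_h` admits operators `b₀`, `B_h(o,a) ∈ ℝ^{r_h × r_{h-1}}`, `υ_h ∈ ℝ^{r_h}`
with `|b₀| ≤ √(A^H)`, `‖B_h(o,a)‖₂ ≤ 1`, `‖υ_h‖₂ ≤ √((O/A)^{H−h})`, satisfying
`υ_hᵀ Σ_o B_h(o,a) = υ_{h-1}ᵀ` and `P(o_{1:h}|a_{1:h}) = υ_hᵀ B_h(o_h,a_h)⋯B_1(o_1,a_1) b₀`. -/
theorem oom_representation {O A H : ℕ} (hO : 0 < O) (hA : 0 < A)
    (p : (Fin H → Fin O) → (Fin H → Fin A) → ℝ)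
    (hpos : ∀ o a, 0 ≤ p o a)
    (hnorm : ∀ a, ∑ o, p o a = 1)
    (hcausal : ∀ h ≤ H, ∀ (o : ℕ → Fin O) (a a' : ℕ → Fin A),
      (∀ i, i < h → a i = a' i) → marg p h o a = marg p h o a')
    (r : ℕ → ℕ) (hrank : ∀ h ≤ H, (sysDyn p h).rank = r h) :
    ∃ (b₀ : ℝ) (B : (h : ℕ) → Fin O → Fin A → Matrix (Fin (r (h + 1))) (Fin (r h)) ℝ)
      (υ : (h : ℕ) → Fin (r h) → ℝ),
      b₀ ^ 2 ≤ (A : ℝ) ^ H ∧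
      (∀ h < H, ∀ (o : Fin O) (a : Fin A) (x : Fin (r h) → ℝ),
        ∑ i, ((B h o a).mulVec x i) ^ 2 ≤ ∑ j, x j ^ 2) ∧
      (∀ h ≤ H, ∑ i, υ h i ^ 2 ≤ ((O : ℝ) / A) ^ (H - h)) ∧
      (∀ h < H, ∀ a : Fin A, (∑ o : Fin O, B h o a).vecMul (υ (h + 1)) = υ h) ∧
      (∀ h ≤ H, ∀ (o : ℕ → Fin O) (a : ℕ → Fin A),
        marg p h o a = ∑ i, υ h i * chain r B b₀ o a h i) := by
  have : Subsingleton (Fin (r 0)) :=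
    Fin.subsingleton_iff_le_one.mpr (hrank 0 (Nat.zero_le H) ▸ rank_sysDyn_zero_le_one)
  choose! U hU using fun h (hh : h ≤ H) => exists_isOrthonormalColBasis _ (hrank h hh)
  have orth (h) (hh : h ≤ H) : (U h)ᵀ * U h = 1 := (hU h hh).transpose_mul_self
  refine ⟨initVal (U 0) p, fun h => obsOp h (U (h + 1)) (U h), fun h => evalVec h (U h),
    ?_, ?_, ?_, ?_, ?_⟩
  · exact sq_initVal_le (orth 0 (Nat.zero_le H)) hpos hnorm
  · exact fun h hh => sum_sq_obsOp_mulVec_le hh (orth (h + 1) hh) (orth h hh.le)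
  · exact fun h hh => sum_sq_evalVec_le hh hO hA (orth h hh)
  · exact fun h hh => vecMul_sum_obsOp_evalVec hcausal hO hh (hU (h + 1) hh) (hU h hh.le)
  · exact fun h hh => marg_eq_sum_evalVec_mul_chain hcausal hU hh
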